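/- Let K and L be number fields and let k, l ≥ 1 be integers. Suppose there is a factor map from 𝔻_{K,k} to 𝔻_{L,l}, i.e., a surjective additive group homomorphism A : 𝓞_K → 𝓞_L and a continuous surjection f : 𝕏_{K,k} → 𝕏_{L,l} satisfying f(t + X) = A(t) + f(X) for all t ∈ 𝓞_K and X ∈ 𝕏_{K,k}. Then K and L are isomorphic as fields and k = l. -/

import Mathlib

open NumberField

/-- The product (Cantor) topology on the power set `𝒫(G) ≅ {0,1}^G`. -/
noncomputable instance powerSetTopology (G : Type*) : TopologicalSpace (Set G) :=
  TopologicalSpace.induced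
    (fun (S : Set G) (g : G) => @decide (g ∈ S) (Classical.propDecidable _))
    inferInstance

/-- The shift space `𝕏_{K,k}` of admissible sets: subsets of `𝓞 K` missing at least
one residue class modulo `𝔭^k` for every nonzero prime ideal `𝔭`. -/
def admissibleSets (K : Type*) [Field K] [NumberField K] (k : ℕ) : Set (Set (𝓞 K)) :=
  {X | ∀ P : Ideal (𝓞 K), P.IsPrime → P ≠ ⊥ → ∃ c : 𝓞 K, ∀ y ∈ X, y - c ∉ P ^ k}

/-!
By the Curtis–Hedlund–Lyndon theorem `f` is a block code, so some finite `Z` has `0 ∈ f Z`. Far away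
from `Z` the set `f Z` looks like `f ∅ = ∅`; hence `A` is injective, as `0 ≠ t ∈ ker A` would give
the far away points `n t` with `A (n t) = 0 ∈ f Z`.

Let `Q` be a prime of `L` over a rational prime `q`. A union of translates `t + Z`, admissible and
with the `t` far apart, has all the `A t` in its image, so these `A t` miss a class modulo `Q ^ l`.
The Chinese remainder theorem supplies enough such unions to show that some coset of `A⁻¹(Q ^ l)` is
covered by translates of the groups `P ^ k`, `P ∣ q`, in a number bounded independently of `q`. By
Neumann's covering lemma one of the `P ^ k` meets `A⁻¹(Q ^ l)` in a subgroup of bounded index; the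
index is a power of `q`, so for large `q` it is `1` and `A⁻¹(Q ^ l) ⊆ P ^ k`. If `Q` is unramified
of degree one, of which there are infinitely many, then comparing indices gives `k ≤ l`, and
`A x * A y ≡ A 1 * A (x * y)` modulo `Q`. Hence `x ↦ A x / A 1` is a ring homomorphism, and it
extends to an isomorphism `K ≃+* L`.

The topological entropy of `𝔻_{K,k}` is `log 2` times the product of the `1 - N(P) ^ (-k)`, which
strictly increases with `k`. It does not increase under factor maps, so `k < l` is impossible.
-/

open IsDedekindDomain

section PrimeIdeals

lemma exists_prime_natCast_mem {R : Type*} [CommRing R] [IsDomain R] [Algebra.IsIntegral ℤ R]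
    (P : HeightOneSpectrum R) : ∃ q : ℕ, q.Prime ∧ (q : R) ∈ P.asIdeal := by
  have : NeZero P.asIdeal := ⟨P.ne_bot⟩
  refine ⟨_, Nat.absNorm_under_prime P.asIdeal, ?_⟩
  exact_mod_cast Int.absNorm_under_mem P.asIdeal

variable {K : Type*} [Field K] [NumberField K]

instance finite_quotient_pow (P : HeightOneSpectrum (𝓞 K)) (k : ℕ) :
    Finite (𝓞 K ⧸ P.asIdeal ^ k) :=
  Ideal.finiteQuotientOfFreeOfNeBot _ (pow_ne_zero k P.ne_bot)

lemma card_quotient_pow (P : HeightOneSpectrum (𝓞 K)) (k : ℕ) :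
    Nat.card (𝓞 K ⧸ P.asIdeal ^ k) = Ideal.absNorm P.asIdeal ^ k := by
  rw [← map_pow, Ideal.absNorm_apply, Submodule.cardQuot_apply]

lemma exists_absNorm_eq_prime_pow {P : HeightOneSpectrum (𝓞 K)} {q : ℕ} (hq : q.Prime)
    (hqP : (q : 𝓞 K) ∈ P.asIdeal) : ∃ i ≠ 0, Ideal.absNorm P.asIdeal = q ^ i := by
  have hdvd : Ideal.absNorm P.asIdeal ∣ q ^ Module.finrank ℤ (𝓞 K) := by
    rw [← Ideal.absNorm_span_natCast]
    exact Ideal.absNorm_dvd_absNorm_of_le ((Ideal.span_singleton_le_iff_mem _).2 hqP)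
  obtain ⟨i, -, hi⟩ := (Nat.dvd_prime_pow hq).1 hdvd
  refine ⟨i, ?_, hi⟩
  rintro rfl
  exact P.isPrime.ne_top (Ideal.absNorm_eq_one_iff.1 hi)

lemma le_absNorm_of_prime_natCast_mem {P : HeightOneSpectrum (𝓞 K)} {q : ℕ} (hq : q.Prime)
    (hqP : (q : 𝓞 K) ∈ P.asIdeal) : q ≤ Ideal.absNorm P.asIdeal := by
  obtain ⟨i, hi, h⟩ := exists_absNorm_eq_prime_pow hq hqP
  exact h ▸ Nat.le_self_pow hi q

lemma le_pow_sup_span_singleton (P : HeightOneSpectrum (𝓞 K)) {q : 𝓞 K} (hq : q ∈ P.asIdeal)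
    (hq2 : q ∉ P.asIdeal ^ 2) (l : ℕ) : P.asIdeal ≤ P.asIdeal ^ l ⊔ Ideal.span {q} := by
  obtain ⟨J, hJ⟩ := Ideal.dvd_span_singleton.2 hq
  have hJP : ¬ J ≤ P.asIdeal := by
    intro h
    apply hq2
    rw [← Ideal.span_singleton_le_iff_mem, hJ, pow_two]
    exact Ideal.mul_mono_right h
  have hcoprime : P.asIdeal ⊔ J = ⊤ :=
    codisjoint_iff.1 (P.isMaximal.out.not_le_iff_codisjoint.1 hJP)
  cases l with
  | zero => simp
  | succ l =>
    rw [hJ, pow_succ', ← Ideal.mul_sup, Ideal.pow_sup_eq_top hcoprime, Ideal.mul_top]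

end PrimeIdeals

section DegreeOnePrimes

variable {L : Type*} [Field L] [NumberField L]

lemma exists_not_isUnit_one_sub_natCast_mul {α : 𝓞 L} (hα : α ≠ 0) :
    ∃ t : ℕ, ¬ IsUnit (1 - t * α) := by
  have hlarge : ∀ σ : L →ₐ[ℚ] ℂ, ∀ᶠ t : ℕ in Filter.atTop, 1 < ‖σ (1 - t * α : 𝓞 L)‖ := by
    intro σ
    have hσα : 0 < ‖σ (α : L)‖ := by simpa using hα
    filter_upwards [tendsto_natCast_atTop_atTop.eventually_gt_atTop (2 / ‖σ (α : L)‖)] with t ht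
    rw [div_lt_iff₀ hσα] at ht
    have htriangle := norm_sub_norm_le (t * σ (α : L)) 1
    rw [norm_sub_rev, norm_mul, Complex.norm_natCast, norm_one] at htriangle
    simp only [map_sub, map_one, map_mul, map_natCast]
    linarith
  obtain ⟨t, ht⟩ := (Filter.eventually_all.2 hlarge).exists
  refine ⟨t, fun hunit => ?_⟩
  have hnorm : ∏ σ : L →ₐ[ℚ] ℂ, ‖σ (1 - t * α : 𝓞 L)‖ = 1 := by
    rw [← norm_prod, ← Algebra.norm_eq_prod_embeddings, eq_ratCast, Complex.norm_ratCast,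
      ← RingOfIntegers.coe_norm, ← Rat.cast_abs, isUnit_iff_norm.1 hunit, Rat.cast_one]
  have hgt : ∏ _σ : L →ₐ[ℚ] ℂ, (1 : ℝ) < ∏ σ : L →ₐ[ℚ] ℂ, ‖σ (1 - t * α : 𝓞 L)‖ :=
    Finset.prod_lt_prod_of_nonempty (fun _ _ => one_pos) (fun σ _ => ht σ)
      ⟨(IsAlgClosed.lift : L →ₐ[ℚ] ℂ), Finset.mem_univ _⟩
  rw [Finset.prod_const_one, hnorm] at hgt
  exact lt_irrefl _ hgt

variable (L) in
lemma exists_integral_primitive_element :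
    ∃ α : 𝓞 L, α ≠ 0 ∧ Algebra.adjoin ℚ {algebraMap (𝓞 L) L α} = ⊤ := by
  obtain ⟨β, hβ0, hβ⟩ : ∃ β : L, β ≠ 0 ∧ IntermediateField.adjoin ℚ {β} = ⊤ := by
    obtain ⟨β, hβ⟩ := Field.exists_primitive_element ℚ L
    by_cases hβ0 : β = 0
    · exact ⟨1, one_ne_zero, by
        rw [← hβ, hβ0, IntermediateField.adjoin_zero, IntermediateField.adjoin_one]⟩
    · exact ⟨β, hβ0, hβ⟩
  obtain ⟨n, α, hn, hα⟩ :=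
    ((IsFractionRing.isAlgebraic_iff ℤ ℚ L).2 (.of_finite ℚ β)).exists_smul_eq (𝓞 L)
  refine ⟨α, ?_, ?_⟩
  · rintro rfl
    exact smul_ne_zero hn hβ0 (by rw [hα, map_zero])
  · rw [← hα, eq_top_iff, ← IntermediateField.top_toSubalgebra, ← hβ,
      IntermediateField.adjoin_simple_toSubalgebra_of_isAlgebraic (.of_finite ℚ β),
      Algebra.adjoin_le_iff, Set.singleton_subset_iff]
    have hmem := Subalgebra.smul_mem _ (Algebra.self_mem_adjoin_singleton ℚ (n • β)) (n : ℚ)⁻¹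
    simpa [← Int.cast_smul_eq_zsmul ℚ, smul_smul, hn] using hmem

lemma inv_mem_subring_of_finite {F : Type*} [Field F] [Finite F] (S : Subring F) {x : F}
    (hx : x ∈ S) : x⁻¹ ∈ S := by
  have := Fintype.ofFinite F
  obtain rfl | hx0 := eq_or_ne x 0
  · simp
  · have hpow : x ^ (Fintype.card F - 2) * x = 1 := by
      rw [← pow_succ, show Fintype.card F - 2 + 1 = Fintype.card F - 1 by
        have := Fintype.one_lt_card (α := F); omega, FiniteField.pow_card_sub_one_eq_one x hx0]
    rw [← eq_inv_of_mul_eq_one_left hpow]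
    exact S.pow_mem hx _

lemma aeval_derivative_minpoly_int_ne_zero (α : 𝓞 L) :
    Polynomial.aeval α (Polynomial.derivative (minpoly ℤ α)) ≠ 0 := by
  intro h0
  have hsep := (Algebra.IsSeparable.isSeparable ℚ (α : L)).aeval_derivative_ne_zero
    (minpoly.aeval ℚ (α : L))
  rw [minpoly.isIntegrallyClosed_eq_field_fractions ℚ L (Algebra.IsIntegral.isIntegral (R := ℤ) α),
    Polynomial.derivative_map, Polynomial.aeval_map_algebraMap,
    Polynomial.aeval_algebraMap_apply, h0, map_zero] at hsep
  exact hsep rfl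

variable (L) in
lemma exists_mul_mem_adjoin_and_mem_differentIdeal :
    ∃ α c : 𝓞 L, α ≠ 0 ∧ c ≠ 0 ∧ c ∈ differentIdeal ℤ (𝓞 L) ∧
      ∀ x, c * x ∈ Algebra.adjoin ℤ {α} := by
  obtain ⟨α, hα0, hα⟩ := exists_integral_primitive_element L
  set c := Polynomial.aeval α (Polynomial.derivative (minpoly ℤ α))
  have hspan : conductor ℤ α * differentIdeal ℤ (𝓞 L) = Ideal.span {c} :=
    conductor_mul_differentIdeal ℤ ℚ L α hα
  have hc : c ∈ conductor ℤ α * differentIdeal ℤ (𝓞 L) :=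
    hspan.ge (Ideal.mem_span_singleton_self c)
  refine ⟨α, c, hα0, aeval_derivative_minpoly_int_ne_zero α, Ideal.mul_le_right hc,
    mem_conductor_iff.1 (Ideal.mul_le_left hc)⟩

lemma natCast_notMem_sq_of_not_differentIdeal_le {P : HeightOneSpectrum (𝓞 L)}
    (hP : ¬ differentIdeal ℤ (𝓞 L) ≤ P.asIdeal) {q : ℕ} (hq : q.Prime) :
    (q : 𝓞 L) ∉ P.asIdeal ^ 2 := by
  intro hq2
  have hprime : Prime (q : ℤ) := Nat.prime_iff_prime_int.1 hq
  have hmax : (Ideal.span {(q : ℤ)}).IsMaximal :=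
    PrincipalIdealRing.isMaximal_of_irreducible hprime.irreducible
  have hdvd := pow_sub_one_dvd_differentIdeal ℤ (p := Ideal.span {(q : ℤ)}) P.asIdeal 2
    (by simpa using hq.ne_zero) (by
      rw [Ideal.dvd_iff_le, Ideal.map_span, Set.image_singleton,
        Ideal.span_singleton_le_iff_mem]
      simpa using hq2)
  exact hP (by simpa [Ideal.dvd_iff_le] using hdvd)

lemma intCast_surjective_quotient_of_mul_mem_adjoin {P : HeightOneSpectrum (𝓞 L)} {α c : 𝓞 L}
    {n : ℤ} (hα : 1 - n * α ∈ P.asIdeal) (hc : c ∉ P.asIdeal)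
    (hadjoin : ∀ x, c * x ∈ Algebra.adjoin ℤ {α}) :
    Function.Surjective (Int.cast : ℤ → 𝓞 L ⧸ P.asIdeal) := by
  have : P.asIdeal.IsMaximal := P.isMaximal
  let _ : Field (𝓞 L ⧸ P.asIdeal) := Ideal.Quotient.field _
  have : Finite (𝓞 L ⧸ P.asIdeal) := by simpa using finite_quotient_pow P 1
  let π : 𝓞 L →ₐ[ℤ] 𝓞 L ⧸ P.asIdeal := Ideal.Quotient.mkₐ ℤ P.asIdeal
  let S : Subring (𝓞 L ⧸ P.asIdeal) := (Int.castRingHom _).range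
  have hnα : (n : 𝓞 L ⧸ P.asIdeal) * π α = 1 := by
    have h := Ideal.Quotient.eq_zero_iff_mem.2 hα
    rw [map_sub, map_one, map_mul, map_intCast, sub_eq_zero] at h
    exact h.symm
  have hαS : π α ∈ S := by
    rw [eq_inv_of_mul_eq_one_right hnα]
    exact inv_mem_subring_of_finite S ⟨n, rfl⟩
  have hadjoinS : ∀ x ∈ Algebra.adjoin ℤ {α}, π x ∈ S := by
    intro x hx
    have hle : Algebra.adjoin ℤ {α} ≤ (subalgebraOfSubring S).comap π :=
      Algebra.adjoin_le_iff.2 (Set.singleton_subset_iff.2 hαS)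
    exact hle hx
  have hcS : ∀ x, π c * π x ∈ S := fun x => by
    rw [← map_mul]
    exact hadjoinS _ (hadjoin x)
  have hc0 : π c ≠ 0 := fun h => hc (Ideal.Quotient.eq_zero_iff_mem.1 h)
  intro y
  obtain ⟨x, rfl⟩ := Ideal.Quotient.mk_surjective y
  have hx := S.mul_mem (inv_mem_subring_of_finite S (by simpa using hcS 1)) (hcS x)
  rwa [inv_mul_cancel_left₀ hc0] at hx

variable (L) in
theorem exists_unramified_degree_one_prime {N : ℕ} (hN : N ≠ 0) :
    ∃ (P : HeightOneSpectrum (𝓞 L)) (q : ℕ), q.Prime ∧ (q : 𝓞 L) ∈ P.asIdeal ∧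
      (q : 𝓞 L) ∉ P.asIdeal ^ 2 ∧ (N : 𝓞 L) ∉ P.asIdeal ∧
      Function.Surjective (Int.cast : ℤ → 𝓞 L ⧸ P.asIdeal) := by
  obtain ⟨α, c, hα, hc, hdifferent, hadjoin⟩ := exists_mul_mem_adjoin_and_mem_differentIdeal L
  set M : ℕ := N * Ideal.absNorm (Ideal.span {c})
  have hM : (M : 𝓞 L) ≠ 0 := by simpa [M, Ideal.absNorm_eq_zero_iff] using ⟨hN, hc⟩
  obtain ⟨t, ht⟩ := exists_not_isUnit_one_sub_natCast_mul (mul_ne_zero hM hα)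
  obtain ⟨I, hI, hmem⟩ := exists_max_ideal_of_mem_nonunits (mem_nonunits_iff.2 ht)
  let P : HeightOneSpectrum (𝓞 L) := ⟨I, hI.isPrime,
    Ring.ne_bot_of_isMaximal_of_not_isField hI (RingOfIntegers.not_isField L)⟩
  have hMP : (M : 𝓞 L) ∉ I := fun h => by
    refine hI.ne_top ((Ideal.eq_top_iff_one I).2 ?_)
    simpa using I.add_mem hmem (I.mul_mem_left t (I.mul_mem_right α h))
  have hNP : (N : 𝓞 L) ∉ I := fun h => hMP (by simpa [M] using I.mul_mem_right _ h)
  have hcP : c ∉ I := fun h => hMP <| by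
    have hle : Ideal.span {c} ≤ I := (Ideal.span_singleton_le_iff_mem _).2 h
    simpa [M] using I.mul_mem_left N (hle (Ideal.absNorm_mem _))
  obtain ⟨q, hq, hqP⟩ := exists_prime_natCast_mem P
  refine ⟨P, q, hq, hqP,
    natCast_notMem_sq_of_not_differentIdeal_le (fun h => hcP (h hdifferent)) hq, hNP,
    intCast_surjective_quotient_of_mul_mem_adjoin (n := t * M) ?_ hcP hadjoin⟩
  simpa [mul_assoc] using hmem

end DegreeOnePrimes

section ResidueClasses

variable {R : Type*} [CommRing R] {I : Ideal R} {X Y : Set R}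

/-- `X` avoids some residue class modulo the ideal `I`; `𝕏_{K,k}` consists of the sets which do so
modulo every `𝔭 ^ k`. -/
def MissesClass (I : Ideal R) (X : Set R) : Prop :=
  ∃ c, ∀ y ∈ X, y - c ∉ I

lemma MissesClass.of_forall_exists_sub_mem (hX : MissesClass I X)
    (h : ∀ y ∈ Y, ∃ x ∈ X, y - x ∈ I) : MissesClass I Y := by
  obtain ⟨c, hc⟩ := hX
  refine ⟨c, fun y hy hyc => ?_⟩
  obtain ⟨x, hx, hyx⟩ := h y hy
  exact hc x hx (by simpa using I.sub_mem hyc hyx)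

lemma MissesClass.mono (hX : MissesClass I X) (h : Y ⊆ X) : MissesClass I Y :=
  hX.of_forall_exists_sub_mem fun y hy => ⟨y, h hy, by simp⟩

lemma MissesClass.translate (hX : MissesClass I X) (t : R) : MissesClass I ((t + ·) '' X) := by
  obtain ⟨c, hc⟩ := hX
  refine ⟨t + c, ?_⟩
  rintro _ ⟨y, hy, rfl⟩
  simpa using hc y hy

lemma missesClass_singleton (hI : I ≠ ⊤) (x : R) : MissesClass I {x} :=
  ⟨x - 1, by simpa [← Ideal.eq_top_iff_one] using hI⟩

lemma not_missesClass_univ : ¬ MissesClass I Set.univ := by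
  rintro ⟨c, hc⟩
  exact hc c trivial (by simp)

lemma missesClass_of_card_lt [Finite (R ⧸ I)] {X : Finset R} (hX : X.card < Nat.card (R ⧸ I)) :
    MissesClass I (X : Set R) := by
  contrapose! hX
  have hsurj : Function.Surjective fun x : X => Ideal.Quotient.mk I x := by
    intro c
    obtain ⟨c, rfl⟩ := Ideal.Quotient.mk_surjective c
    simp only [MissesClass, not_exists, not_forall, not_not] at hX
    obtain ⟨y, hy, hyc⟩ := hX c
    exact ⟨⟨y, hy⟩, Ideal.Quotient.eq.2 hyc⟩
  simpa using Nat.card_le_card_of_surjective _ hsurj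

end ResidueClasses

section PowerSet

variable {G : Type*}

/-- The identification `𝒫(G) ≅ {0,1}^G` by indicator functions. -/
noncomputable def powerSetHomeomorph (G : Type*) : Set G ≃ₜ (G → Bool) :=
  Equiv.toHomeomorphOfIsInducing
    { toFun := fun X g => @decide (g ∈ X) (Classical.propDecidable _)
      invFun := fun x => {g | x g = true}
      left_inv := fun X => by ext; simp
      right_inv := fun x => by ext; simp } ⟨rfl⟩

instance compactSpace_powerSet : CompactSpace (Set G) :=
  (powerSetHomeomorph G).symm.compactSpace

lemma isClopen_setOf_mem (g : G) : IsClopen {X : Set G | g ∈ X} := by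
  have hpreimage : {X : Set G | g ∈ X} = (fun X => powerSetHomeomorph G X g) ⁻¹' {true} := by
    ext; simp [powerSetHomeomorph]
  rw [hpreimage]
  exact (isClopen_discrete _).preimage
    ((continuous_apply g).comp (powerSetHomeomorph G).continuous)

lemma isClopen_setOf_iff {T : Type*} [TopologicalSpace T] {U V : Set T} (hU : IsClopen U)
    (hV : IsClopen V) : IsClopen {x | x ∈ U ↔ x ∈ V} := by
  have hunion : {x | x ∈ U ↔ x ∈ V} = U ∩ V ∪ Uᶜ ∩ Vᶜ :=
    Set.ext fun x => iff_iff_and_or_not_and_not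
  rw [hunion]
  exact (hU.inter hV).union (hU.compl.inter hV.compl)

lemma exists_finset_determining_isClopen {𝒳 : Set (Set G)} (h𝒳 : IsClosed 𝒳) {U : Set 𝒳}
    (hU : IsClopen U) :
    ∃ B : Finset G, ∀ X X' : 𝒳, (∀ b ∈ B, b ∈ X.1 ↔ b ∈ X'.1) → (X ∈ U ↔ X' ∈ U) := by
  have : CompactSpace 𝒳 := isCompact_iff_compactSpace.1 h𝒳.isCompact
  have hclopen : ∀ g : G, IsClopen {X : 𝒳 | g ∈ X.1} := fun g =>
    (isClopen_setOf_mem g).preimage continuous_subtype_val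
  have hagree : ∀ V : Set 𝒳, IsClopen V → IsClopen {p : 𝒳 × 𝒳 | p.1 ∈ V ↔ p.2 ∈ V} :=
    fun V hV => isClopen_setOf_iff (hV.preimage continuous_fst) (hV.preimage continuous_snd)
  obtain ⟨B, hB⟩ := (hagree U hU).compl.isClosed.isCompact.elim_finite_subfamily_closed
    (fun g : G => {p : 𝒳 × 𝒳 | g ∈ p.1.1 ↔ g ∈ p.2.1}) (fun g => (hagree _ (hclopen g)).isClosed)
    (by
      refine Set.eq_empty_of_forall_notMem fun p ⟨hpU, hp⟩ => hpU ?_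
      have heq : p.1 = p.2 := Subtype.ext (Set.ext fun g => Set.mem_iInter.1 hp g)
      simp [heq])
  refine ⟨B, fun X X' h => ?_⟩
  by_contra hXX'
  exact hB.subset (show (X, X') ∈ _ from ⟨hXX', Set.mem_iInter₂.2 h⟩)

lemma isClosed_setOf_missesClass {R : Type*} [CommRing R] (I : Ideal R) [Finite (R ⧸ I)] :
    IsClosed {X : Set R | MissesClass I X} := by
  have hunion : {X : Set R | MissesClass I X} =
      ⋃ c : R ⧸ I, ⋂ y : R, ⋂ (_ : Ideal.Quotient.mk I y = c), {X : Set R | y ∈ X}ᶜ := by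
    ext X
    simp only [MissesClass, Set.mem_ofPred_eq, Set.mem_iUnion, Set.mem_iInter, Set.mem_compl_iff,
      Ideal.Quotient.mk_surjective.exists, Ideal.Quotient.eq]
    exact exists_congr fun c => forall_congr' fun y => imp_not_comm
  rw [hunion]
  exact isClosed_iUnion_of_finite fun c => isClosed_iInter fun y => isClosed_iInter fun _ =>
    (isClopen_setOf_mem y).compl.isClosed

end PowerSet

section AdmissibleSets

variable {K : Type*} [Field K] [NumberField K] {k : ℕ} {X : Set (𝓞 K)}

instance nonempty_heightOneSpectrum : Nonempty (HeightOneSpectrum (𝓞 K)) := by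
  obtain ⟨M, hM⟩ := Ideal.exists_maximal (𝓞 K)
  exact ⟨⟨M, hM.isPrime, Ring.ne_bot_of_isMaximal_of_not_isField hM (RingOfIntegers.not_isField K)⟩⟩

lemma mem_admissibleSets_iff :
    X ∈ admissibleSets K k ↔ ∀ P : HeightOneSpectrum (𝓞 K), MissesClass (P.asIdeal ^ k) X :=
  ⟨fun h P => h P.asIdeal P.isPrime P.ne_bot, fun h P hP h0 => h ⟨P, hP, h0⟩⟩

lemma isClosed_admissibleSets : IsClosed (admissibleSets K k) := by
  have hinter : admissibleSets K k =
      ⋂ P : HeightOneSpectrum (𝓞 K), {X | MissesClass (P.asIdeal ^ k) X} := by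
    ext X
    simp [mem_admissibleSets_iff]
  rw [hinter]
  exact isClosed_iInter fun P => isClosed_setOf_missesClass _

lemma isLowerSet_admissibleSets : IsLowerSet (admissibleSets K k) := fun _ _ hYX hX =>
  mem_admissibleSets_iff.2 fun P => (mem_admissibleSets_iff.1 hX P).mono hYX

lemma singleton_mem_admissibleSets (hk : k ≠ 0) (x : 𝓞 K) : {x} ∈ admissibleSets K k :=
  mem_admissibleSets_iff.2 fun P => missesClass_singleton
    (ne_top_of_le_ne_top P.isPrime.ne_top (Ideal.pow_le_self hk)) x

lemma univ_notMem_admissibleSets : Set.univ ∉ admissibleSets K k := fun h =>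
  not_missesClass_univ (mem_admissibleSets_iff.1 h (Classical.arbitrary _))

end AdmissibleSets

section BlockCodes

variable {G H : Type*} [AddCommGroup G] [AddCommGroup H] {𝒳 : Set (Set G)} {𝒴 : Set (Set H)}

/-- The family `𝒳` is closed under translation, so that `G` acts on it. -/
def IsTranslationInvariant (𝒳 : Set (Set G)) : Prop :=
  ∀ X ∈ 𝒳, ∀ t, (t + ·) '' X ∈ 𝒳

/-- The map `f` intertwines the translation actions of `G` and `H` along `A`, i.e.
`f (t + X) = A t + f X`. The translate `t + X` is quantified as a point `Y` of `𝒳`, so that the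
notion makes sense without translation invariance of `𝒳`. -/
def IsEquivariant (A : G →+ H) (f : 𝒳 → 𝒴) : Prop :=
  ∀ (t : G) (X Y : 𝒳), (Y : Set G) = (t + ·) '' (X : Set G) →
    (f Y : Set H) = (A t + ·) '' (f X : Set H)

/-- The map `f` is a sliding block code along `A` with window `B`: whether `A t` belongs to `f X`
depends only on the pattern which `X` shows in the window `t + B`. -/
def IsBlockCode (A : G →+ H) (f : 𝒳 → 𝒴) (B : Finset G) : Prop :=
  ∀ (s t : G) (X Y : 𝒳), (∀ b ∈ B, s + b ∈ X.1 ↔ t + b ∈ Y.1) → (A s ∈ (f X).1 ↔ A t ∈ (f Y).1)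

variable {A : G →+ H} {f : 𝒳 → 𝒴} {B : Finset G}

lemma IsEquivariant.exists_isBlockCode (hf : IsEquivariant A f) (hcont : Continuous f)
    (hclosed : IsClosed 𝒳) (h𝒳 : IsTranslationInvariant 𝒳) :
    ∃ B, IsBlockCode A f B := by
  obtain ⟨B, hB⟩ := exists_finset_determining_isClopen hclosed
    ((isClopen_setOf_mem (0 : H)).preimage (continuous_subtype_val.comp hcont))
  have hshift : ∀ (t : G) (X : 𝒳), A t ∈ (f X).1 ↔ 0 ∈ (f ⟨_, h𝒳 X X.2 (-t)⟩).1 := fun t X => by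
    rw [hf (-t) X ⟨_, h𝒳 X X.2 (-t)⟩ rfl]
    simp
  refine ⟨B, fun s t X Y h => ?_⟩
  rw [hshift, hshift]
  refine hB _ _ fun b hb => ?_
  simpa [neg_add_eq_iff_eq_add] using h b hb

lemma IsBlockCode.exists_finset_zero_mem (hf : IsBlockCode A f B) (hsurj : Function.Surjective f)
    (h𝒳 : IsLowerSet 𝒳) (h𝒴 : {0} ∈ 𝒴) :
    ∃ (Z : Finset G) (hZ : ↑Z ∈ 𝒳), 0 ∈ (f ⟨Z, hZ⟩).1 := by
  classical
  obtain ⟨X, hX⟩ := hsurj ⟨{0}, h𝒴⟩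
  refine ⟨{b ∈ B | b ∈ X.1}, h𝒳 (fun b hb => (Finset.mem_filter.1 hb).2) X.2, ?_⟩
  rw [← map_zero A, ← hf 0 0 X _ fun b hb => by simp [hb], hX]
  simp

lemma IsBlockCode.apply_empty (hf : IsBlockCode A f B) (hA : Function.Surjective A)
    (h𝒴 : Set.univ ∉ 𝒴) (hempty : ∅ ∈ 𝒳) : (f ⟨∅, hempty⟩).1 = ∅ := by
  by_contra hne
  obtain ⟨y, hy⟩ := Set.nonempty_iff_ne_empty.2 hne
  refine h𝒴 ?_
  convert (f ⟨∅, hempty⟩).2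
  refine (Set.eq_univ_of_forall fun x => ?_).symm
  obtain ⟨s, rfl⟩ := hA y
  obtain ⟨t, rfl⟩ := hA x
  exact (hf s t _ _ fun b _ => Iff.rfl).1 hy

lemma IsBlockCode.injective [IsAddTorsionFree G] (hf : IsBlockCode A f B)
    (hfsurj : Function.Surjective f) (hA : Function.Surjective A) (h𝒳 : IsLowerSet 𝒳)
    (h𝒴 : Set.univ ∉ 𝒴) (h0 : {0} ∈ 𝒴) : Function.Injective A := by
  classical
  obtain ⟨Z, hZ, hZ0⟩ := hf.exists_finset_zero_mem hfsurj h𝒳 h0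
  refine (injective_iff_map_eq_zero A).2 fun t ht => ?_
  by_contra hne
  obtain ⟨n, hn⟩ := ((Finset.image₂ (· - ·) Z B).finite_toSet.preimage
    (injective_nsmul_iff_not_isOfFinAddOrder.2
      (not_isOfFinAddOrder_of_isAddTorsionFree hne)).injOn).exists_notMem
  have hempty : ∅ ∈ 𝒳 := h𝒳 (Set.empty_subset _) hZ
  have hiff : A (n • t) ∈ (f ⟨Z, hZ⟩).1 ↔ A 0 ∈ (f ⟨∅, hempty⟩).1 := by
    refine hf _ _ _ _ fun b hb => iff_of_false (fun hz => hn ?_) (Set.notMem_empty _)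
    exact Finset.mem_image₂.2 ⟨_, hz, b, hb, add_sub_cancel_right _ _⟩
  rw [hf.apply_empty hA h𝒴 hempty, map_nsmul, ht, nsmul_zero] at hiff
  exact hiff.1 hZ0

lemma IsBlockCode.map_mem_iUnion [DecidableEq G] {ι : Type*} {Z : Finset G} {t : ι → G}
    (hf : IsBlockCode A f B) (hZ : ↑Z ∈ 𝒳) (hZ0 : 0 ∈ (f ⟨Z, hZ⟩).1)
    (ht : Pairwise fun i j => t j - t i ∉ Finset.image₂ (· - ·) B Z)
    (hunion : ⋃ i, (t i + ·) '' (Z : Set G) ∈ 𝒳) (i : ι) : A (t i) ∈ (f ⟨_, hunion⟩).1 := by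
  rw [← map_zero A] at hZ0
  refine (hf (t i) 0 _ _ fun b hb => ?_).2 hZ0
  simp only [Set.mem_iUnion, zero_add]
  constructor
  · rintro ⟨j, z, hz, hjz⟩
    obtain rfl : i = j := by
      by_contra hij
      refine ht hij (Finset.mem_image₂.2 ⟨b, hb, z, hz, ?_⟩)
      rw [sub_eq_sub_iff_add_eq_add, add_comm b, ← hjz]
    rwa [← add_left_cancel hjz]
  · exact fun hz => ⟨i, b, hz, rfl⟩

end BlockCodes

lemma isTranslationInvariant_admissibleSets {K : Type*} [Field K] [NumberField K] {k : ℕ} :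
    IsTranslationInvariant (admissibleSets K k) := fun _ hX t =>
  mem_admissibleSets_iff.2 fun P => (mem_admissibleSets_iff.1 hX P).translate t

lemma exists_pairwise_add_mul_sub_notMem {R ι : Type*} [CommRing R] [IsDomain R] [CharZero R]
    [Finite ι] (x : ι → R) {N : R} (hN : N ≠ 0) (F : Finset R) :
    ∃ s : ι → R, Pairwise fun i j => (x j + N * s j) - (x i + N * s i) ∉ F := by
  obtain ⟨n, ⟨e⟩⟩ := Finite.exists_equiv_fin ι
  have hfinite : ∀ i j, i ≠ j →
      {C : ℕ | (x j + N * (C * (e j : ℕ))) - (x i + N * (C * (e i : ℕ))) ∈ F}.Finite := by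
    refine fun i j hij => F.finite_toSet.preimage (Function.Injective.injOn fun a b hab => ?_)
    have hne : ((e j : ℕ) : R) - (e i : ℕ) ≠ 0 := by
      simpa [sub_eq_zero, Fin.val_inj] using hij.symm
    have hzero : N * (((e j : ℕ) : R) - (e i : ℕ)) * ((a : R) - b) = 0 := by
      linear_combination hab
    simpa [hN, hne, sub_eq_zero] using hzero
  obtain ⟨C, hC⟩ := (Set.finite_iUnion fun i => Set.finite_iUnion fun j =>
    Set.finite_iUnion fun hij => hfinite i j hij).exists_notMem
  simp only [Set.mem_iUnion, not_exists] at hC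
  exact ⟨fun i => C * (e i : ℕ), fun i j hij => hC i j hij⟩

lemma exists_dvd_sub_dvd_pairwise_sub_notMem {R ι : Type*} [CommRing R] [IsDomain R] [CharZero R]
    [Finite ι] {a m : R} (ham : IsCoprime a m) (hne : a * m ≠ 0) (x : ι → R) (F : Finset R) :
    ∃ y : ι → R, (∀ i, a ∣ y i - x i) ∧ (∀ i, m ∣ y i) ∧ Pairwise fun i j => y j - y i ∉ F := by
  obtain ⟨u, v, huv⟩ := ham
  obtain ⟨s, hs⟩ := exists_pairwise_add_mul_sub_notMem (fun i => v * m * x i) hne F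
  refine ⟨fun i => v * m * x i + a * m * s i, fun i => ⟨m * s i - u * x i, ?_⟩,
    fun i => ⟨v * x i + a * s i, by ring⟩, hs⟩
  linear_combination x i * huv

section Covering

variable {K : Type*} [Field K] [NumberField K] {k : ℕ}

lemma exists_coprime_natCast_mem_pow {q : ℕ} (hq : q.Prime) (n k : ℕ) :
    ∃ m : ℕ, m ≠ 0 ∧ q.Coprime m ∧ ∀ P : HeightOneSpectrum (𝓞 K), (q : 𝓞 K) ∉ P.asIdeal →
      Ideal.absNorm P.asIdeal ≤ n → (m : 𝓞 K) ∈ P.asIdeal ^ k := by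
  have hn := n.factorial_ne_zero
  refine ⟨(n.factorial / q ^ n.factorial.factorization q) ^ k,
    pow_ne_zero _ (Nat.ordCompl_pos q hn).ne', (Nat.coprime_ordCompl hq hn).pow_right k,
    fun P hqP hPn => ?_⟩
  obtain ⟨p, hp, hpP⟩ := exists_prime_natCast_mem P
  have hpq : p.Coprime (q ^ n.factorial.factorization q) := by
    refine Nat.Coprime.pow_right _ ((Nat.coprime_primes hp hq).2 ?_)
    rintro rfl
    exact hqP hpP
  obtain ⟨c, hc⟩ : p ∣ n.factorial / q ^ n.factorial.factorization q := by
    refine hpq.dvd_of_dvd_mul_left ?_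
    rw [Nat.ordProj_mul_ordCompl_eq_self]
    exact hp.dvd_factorial.2 ((le_absNorm_of_prime_natCast_mem hp hpP).trans hPn)
  rw [hc]
  push_cast
  exact Ideal.pow_mem_pow (Ideal.mul_mem_right _ _ hpP) k

lemma iUnion_translate_mem_admissibleSets {ι : Type*} [Finite ι] {Z : Finset (𝓞 K)}
    (hZ : ↑Z ∈ admissibleSets K k) (hk : k ≠ 0) {t : ι → 𝓞 K}
    (ht : ∀ P : HeightOneSpectrum (𝓞 K), (∀ i, ∀ z ∈ Z, t i + z ∉ P.asIdeal ^ k) ∨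
      (∀ i, t i ∈ P.asIdeal ^ k) ∨ Nat.card ι * Z.card < Ideal.absNorm P.asIdeal) :
    ⋃ i, (t i + ·) '' (Z : Set (𝓞 K)) ∈ admissibleSets K k := by
  classical
  refine mem_admissibleSets_iff.2 fun P => ?_
  rcases ht P with hmiss | hsmall | hlarge
  · refine ⟨0, ?_⟩
    simp only [Set.mem_iUnion, sub_zero]
    rintro _ ⟨i, z, hz, rfl⟩
    exact hmiss i z hz
  · refine (mem_admissibleSets_iff.1 hZ P).of_forall_exists_sub_mem ?_
    simp only [Set.mem_iUnion]
    rintro _ ⟨i, z, hz, rfl⟩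
    exact ⟨z, hz, by simpa using hsmall i⟩
  · have := Fintype.ofFinite ι
    have himage : ⋃ i, (t i + ·) '' (Z : Set (𝓞 K)) =
        (Finset.image₂ (fun i z => t i + z) Finset.univ Z : Finset (𝓞 K)) := by
      simp only [Finset.coe_image₂, Finset.coe_univ, ← Set.iUnion_image_left, Set.biUnion_univ]
    rw [himage]
    refine missesClass_of_card_lt ((Finset.card_image₂_le _ _ _).trans_lt ?_)
    rw [Finset.card_univ, ← Nat.card_eq_fintype_card, card_quotient_pow]
    exact hlarge.trans_le (Nat.le_self_pow hk _)

variable {L : Type*} [Field L] [NumberField L] {l : ℕ} {A : 𝓞 K →+ 𝓞 L}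
  {f : admissibleSets K k → admissibleSets L l} {B Z : Finset (𝓞 K)}

/- Otherwise every class `d` modulo `Q ^ l` contains some `A t` such that `t + Z` avoids all the
`P ^ k` over `q`. Moving these `t` by the Chinese remainder theorem makes the union of the `t + Z`
admissible and keeps them apart, so that its image under `f` meets every class modulo `Q ^ l`. -/
lemma IsBlockCode.exists_forall_exists_add_mem_pow (hf : IsBlockCode A f B) (hk : k ≠ 0)
    (hZ : ↑Z ∈ admissibleSets K k) (hZ0 : 0 ∈ (f ⟨Z, hZ⟩).1) (Q : HeightOneSpectrum (𝓞 L))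
    {q : ℕ} (hq : q.Prime) (hqQ : (q : 𝓞 L) ∈ Q.asIdeal) :
    ∃ d : 𝓞 L, ∀ t : 𝓞 K, A t - d ∈ Q.asIdeal ^ l →
      ∃ P : HeightOneSpectrum (𝓞 K), (q : 𝓞 K) ∈ P.asIdeal ∧ ∃ z ∈ Z, t + z ∈ P.asIdeal ^ k := by
  classical
  by_contra! hcon
  choose t ht using fun d : 𝓞 L ⧸ Q.asIdeal ^ l => hcon d.out
  obtain ⟨m, hm0, hqm, hm⟩ := exists_coprime_natCast_mem_pow (K := K) hq
    (Nat.card (𝓞 L ⧸ Q.asIdeal ^ l) * Z.card) k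
  have hcoprime : IsCoprime ((q ^ (k + l) : ℕ) : 𝓞 K) m := (hqm.pow_left _).cast
  obtain ⟨y, hqy, hmy, hy⟩ := exists_dvd_sub_dvd_pairwise_sub_notMem hcoprime
    (mul_ne_zero (Nat.cast_ne_zero.2 (pow_ne_zero _ hq.ne_zero)) (Nat.cast_ne_zero.2 hm0)) t
    (Finset.image₂ (· - ·) B Z)
  choose r hr using hqy
  have hW : ⋃ d, (y d + ·) '' (Z : Set (𝓞 K)) ∈ admissibleSets K k := by
    refine iUnion_translate_mem_admissibleSets hZ hk fun P => ?_
    by_cases hqP : (q : 𝓞 K) ∈ P.asIdeal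
    · refine .inl fun d z hz hyz => (ht d).2 P hqP z hz ?_
      have hqk : ((q ^ (k + l) : ℕ) : 𝓞 K) ∈ P.asIdeal ^ k := by
        rw [pow_add]
        push_cast
        exact Ideal.mul_mem_right _ _ (Ideal.pow_mem_pow hqP k)
      convert sub_mem hyz (Ideal.mul_mem_right (r d) _ hqk) using 1
      linear_combination -hr d
    · refine .inr ((le_or_gt _ _).imp (fun hle d => ?_) id)
      exact Ideal.mem_of_dvd _ (hmy d) (hm P hqP hle)
  obtain ⟨c, hc⟩ := mem_admissibleSets_iff.1 (f ⟨_, hW⟩).2 Q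
  have hmem : A (y (Ideal.Quotient.mk _ c)) ∈ (f ⟨_, hW⟩).1 := hf.map_mem_iUnion hZ hZ0 hy hW _
  refine hc _ hmem ?_
  have hqr : ∀ d, A (y d) - A (t d) ∈ Q.asIdeal ^ l := fun d => by
    rw [← map_sub, hr, ← nsmul_eq_mul, map_nsmul, nsmul_eq_mul, pow_add]
    push_cast
    exact Ideal.mul_mem_right _ _ (Ideal.mul_mem_left _ _ (Ideal.pow_mem_pow hqQ l))
  have hout : (Ideal.Quotient.mk (Q.asIdeal ^ l) c).out - c ∈ Q.asIdeal ^ l :=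
    Ideal.Quotient.eq.1 (Ideal.Quotient.mk_out _)
  simpa using add_mem (add_mem (hqr (Ideal.Quotient.mk _ c)) (ht (Ideal.Quotient.mk _ c)).1) hout

end Covering

/- A coset of `H` covered by cosets of the `S i` is handled by Neumann's covering lemma in `H`. -/
lemma exists_relIndex_le_card_of_forall_exists_add_mem {G ι : Type*} [AddCommGroup G]
    {H : AddSubgroup G} {S : ι → AddSubgroup G} {s : Finset ι} {x : ι → G} {t : G}
    (hcover : ∀ h ∈ H, ∃ i ∈ s, t + h + x i ∈ S i) :
    ∃ i ∈ s, (S i).relIndex H ≤ s.card := by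
  have hg : ∀ i, ∃ g : H, ∀ h : H, t + h + x i ∈ S i → t + g + x i ∈ S i := fun i => by
    by_cases hi : ∃ h : H, t + h + x i ∈ S i
    · exact hi.imp fun g hg _ _ => hg
    · exact ⟨0, fun h hh => absurd ⟨h, hh⟩ hi⟩
  choose g hg using hg
  obtain ⟨i, hi, -, hindex⟩ := AddSubgroup.exists_index_le_card_of_leftCoset_cover
    (H := fun i => (S i).addSubgroupOf H) (g := g) (s := s) (by
      refine Set.eq_univ_of_forall fun h => ?_
      obtain ⟨i, hi, hmem⟩ := hcover h h.2
      refine Set.mem_iUnion₂.2 ⟨i, hi, Set.mem_vadd_set_iff_neg_vadd_mem.2 ?_⟩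
      have hsub := sub_mem hmem (hg i h hmem)
      rw [add_sub_add_right_eq_sub, add_sub_add_left_eq_sub] at hsub
      simpa [AddSubgroup.mem_addSubgroupOf, neg_add_eq_sub] using hsub)
  exact ⟨i, hi, hindex⟩

section Inclusion

variable {K : Type*} [Field K] [NumberField K] {k q : ℕ}

lemma finite_setOf_natCast_mem (hq : q ≠ 0) :
    {P : HeightOneSpectrum (𝓞 K) | (q : 𝓞 K) ∈ P.asIdeal}.Finite := by
  refine (Ideal.finite_factors (I := Ideal.span {(q : 𝓞 K)}) ?_).subset fun P hP =>
    Ideal.dvd_span_singleton.2 hP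
  simpa [Ideal.span_singleton_eq_bot] using hq

lemma card_le_finrank_of_forall_natCast_mem (hq : q.Prime) {T : Finset (HeightOneSpectrum (𝓞 K))}
    (hT : ∀ P ∈ T, (q : 𝓞 K) ∈ P.asIdeal) : T.card ≤ Module.finrank ℚ K := by
  classical
  have hdvd : ∏ P ∈ T, P.asIdeal ∣ Ideal.span {(q : 𝓞 K)} := by
    have hinj : Set.InjOn HeightOneSpectrum.asIdeal (T : Set (HeightOneSpectrum (𝓞 K))) :=
      fun _ _ _ _ h => HeightOneSpectrum.ext h
    rw [← Finset.prod_image hinj (f := fun I : Ideal (𝓞 K) => I)]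
    refine Finset.prod_primes_dvd _ ?_ ?_ <;> simp only [Finset.forall_mem_image]
    · exact fun P _ => P.prime
    · exact fun P hP => Ideal.dvd_span_singleton.2 (hT P hP)
  refine (Nat.pow_le_pow_iff_right hq.one_lt).1 ?_
  calc q ^ T.card ≤ ∏ P ∈ T, Ideal.absNorm P.asIdeal := by
        rw [← Finset.prod_const]
        exact Finset.prod_le_prod' fun P hP => le_absNorm_of_prime_natCast_mem hq (hT P hP)
    _ ≤ q ^ Module.finrank ℚ K := by
        have hnorm := map_dvd Ideal.absNorm hdvd
        rw [map_prod, Ideal.absNorm_span_natCast, RingOfIntegers.rank] at hnorm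
        exact Nat.le_of_dvd (pow_pos hq.pos _) hnorm

lemma index_pow (P : HeightOneSpectrum (𝓞 K)) (k : ℕ) :
    (P.asIdeal ^ k).toAddSubgroup.index = Ideal.absNorm P.asIdeal ^ k :=
  card_quotient_pow P k

lemma exists_le_pow_of_forall_exists_add_mem_pow {H : AddSubgroup (𝓞 K)} {Z : Finset (𝓞 K)}
    {t : 𝓞 K} (hq : q.Prime) (hlarge : Module.finrank ℚ K * Z.card < q)
    (hcover : ∀ h ∈ H, ∃ P : HeightOneSpectrum (𝓞 K), (q : 𝓞 K) ∈ P.asIdeal ∧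
      ∃ z ∈ Z, t + h + z ∈ P.asIdeal ^ k) :
    ∃ P : HeightOneSpectrum (𝓞 K), (q : 𝓞 K) ∈ P.asIdeal ∧
      H ≤ (P.asIdeal ^ k).toAddSubgroup := by
  set T := (finite_setOf_natCast_mem (K := K) hq.ne_zero).toFinset
  have hT : ∀ P ∈ T, (q : 𝓞 K) ∈ P.asIdeal := fun P => (Set.Finite.mem_toFinset _).1
  obtain ⟨⟨P, z⟩, hPz, hle⟩ := exists_relIndex_le_card_of_forall_exists_add_mem
    (S := fun i : HeightOneSpectrum (𝓞 K) × 𝓞 K => (i.1.asIdeal ^ k).toAddSubgroup)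
    (s := T ×ˢ Z) (x := Prod.snd) (t := t) (H := H) fun h hh => by
      obtain ⟨P, hqP, z, hz, hmem⟩ := hcover h hh
      exact ⟨(P, z), Finset.mem_product.2 ⟨(Set.Finite.mem_toFinset _).2 hqP, hz⟩, hmem⟩
  have hqP := hT P (Finset.mem_product.1 hPz).1
  refine ⟨P, hqP, AddSubgroup.relIndex_eq_one.1 ?_⟩
  obtain ⟨i, -, hi⟩ := exists_absNorm_eq_prime_pow hq hqP
  have hdvd : (P.asIdeal ^ k).toAddSubgroup.relIndex H ∣ q ^ (i * k) := by
    rw [pow_mul, ← hi, ← index_pow]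
    exact AddSubgroup.relIndex_dvd_index_of_normal _ _
  obtain ⟨j, -, hj⟩ := (Nat.dvd_prime_pow hq).1 hdvd
  have hlt : q ^ j < q ^ 1 := by
    rw [pow_one, ← hj]
    refine hle.trans_lt (lt_of_le_of_lt ?_ hlarge)
    rw [Finset.card_product]
    exact Nat.mul_le_mul_right _ (card_le_finrank_of_forall_natCast_mem hq hT)
  rw [hj, Nat.lt_one_iff.1 ((Nat.pow_lt_pow_iff_right hq.one_lt).1 hlt), pow_zero]

variable {L : Type*} [Field L] [NumberField L] {l : ℕ} {A : 𝓞 K →+ 𝓞 L}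
  {f : admissibleSets K k → admissibleSets L l} {B : Finset (𝓞 K)}

lemma IsBlockCode.exists_forall_map_mem_pow_imp (hf : IsBlockCode A f B)
    (hfsurj : Function.Surjective f) (hA : Function.Surjective A) (hk : k ≠ 0) (hl : l ≠ 0) :
    ∃ C, ∀ (Q : HeightOneSpectrum (𝓞 L)) (q : ℕ), q.Prime → (q : 𝓞 L) ∈ Q.asIdeal → C < q →
      ∃ P : HeightOneSpectrum (𝓞 K), (q : 𝓞 K) ∈ P.asIdeal ∧
        ∀ x, A x ∈ Q.asIdeal ^ l → x ∈ P.asIdeal ^ k := by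
  obtain ⟨Z, hZ, hZ0⟩ :=
    hf.exists_finset_zero_mem hfsurj isLowerSet_admissibleSets (singleton_mem_admissibleSets hl 0)
  refine ⟨Module.finrank ℚ K * Z.card, fun Q q hq hqQ hlarge => ?_⟩
  obtain ⟨d, hd⟩ := hf.exists_forall_exists_add_mem_pow hk hZ hZ0 Q hq hqQ
  obtain ⟨t, rfl⟩ := hA d
  exact exists_le_pow_of_forall_exists_add_mem_pow
    (H := (Q.asIdeal ^ l).toAddSubgroup.comap A) hq hlarge fun h hh =>
      hd (t + h) (by simpa using hh)

end Inclusion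

section Multiplicativity

lemma map_mul_map_eq_of_ker_le {R F : Type*} [CommRing R] [Field F]
    (hF : Function.Surjective (Int.cast : ℤ → F)) {g : R →+ F} {P : Ideal R} (hP : P ≠ ⊤)
    (hker : ∀ x, g x = 0 → x ∈ P) (x y : R) : g x * g y = g 1 * g (x * y) := by
  have h1P : (1 : R) ∉ P := (Ideal.ne_top_iff_one P).1 hP
  have h1 : g 1 ≠ 0 := fun h => h1P (hker 1 h)
  have hint : ∀ a : ℤ, g a = a * g 1 := fun a => by
    rw [← zsmul_one, map_zsmul, zsmul_eq_mul]
  have hclass : ∀ z, ∃ a : ℤ, g z = a * g 1 ∧ z - a ∈ P := fun z => by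
    obtain ⟨a, ha⟩ := hF (g z / g 1)
    have hz : g z = a * g 1 := by rw [ha, div_mul_cancel₀ _ h1]
    exact ⟨a, hz, hker _ (by rw [map_sub, hint, hz, sub_self])⟩
  have hzero : ∀ a : ℤ, (a : R) ∈ P → (a : F) = 0 := fun a ha => by
    by_contra hne
    obtain ⟨b, hb⟩ := hF (a : F)⁻¹
    have hab : ((a * b - 1 : ℤ) : R) ∈ P := hker _ (by
      rw [hint]
      push_cast
      rw [hb, mul_inv_cancel₀ hne, sub_self, zero_mul])
    push_cast at hab
    exact h1P (by simpa using P.sub_mem (P.mul_mem_right (b : R) ha) hab)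
  obtain ⟨a, hxa, haP⟩ := hclass x
  obtain ⟨b, hyb, hbP⟩ := hclass y
  obtain ⟨c, hxyc, hcP⟩ := hclass (x * y)
  have habc : ((a * b - c : ℤ) : F) = 0 := hzero _ (by
    convert sub_mem hcP (add_mem (P.mul_mem_left y haP) (P.mul_mem_left a hbP)) using 1
    push_cast
    ring)
  push_cast at habc
  rw [hxa, hyb, hxyc]
  linear_combination (g 1) ^ 2 * habc

variable {L : Type*} [Field L] [NumberField L] {l q : ℕ} {Q : HeightOneSpectrum (𝓞 L)}

lemma absNorm_eq_of_intCast_surjective (hq : q.Prime) (hqQ : (q : 𝓞 L) ∈ Q.asIdeal)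
    (hQ : Function.Surjective (Int.cast : ℤ → 𝓞 L ⧸ Q.asIdeal)) : Ideal.absNorm Q.asIdeal = q := by
  refine le_antisymm ?_ (le_absNorm_of_prime_natCast_mem hq hqQ)
  have hchar : CharP (𝓞 L ⧸ Q.asIdeal) q := ringChar.eq_iff.1
    (CharP.ringChar_of_prime_eq_zero hq (by simpa using Ideal.Quotient.eq_zero_iff_mem.2 hqQ))
  have : NeZero q := ⟨hq.ne_zero⟩
  have hsurj : Function.Surjective (ZMod.castHom dvd_rfl (𝓞 L ⧸ Q.asIdeal) : ZMod q → _) :=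
    fun x => (hQ x).imp' Int.cast fun n hn => by rw [map_intCast, hn]
  simpa [Ideal.absNorm_apply, Submodule.cardQuot_apply] using Nat.card_le_card_of_surjective _ hsurj

lemma mem_of_map_mem_of_forall_map_mem_pow_imp {R : Type*} [CommRing R] {A : R →+ 𝓞 L}
    (hA : Function.Bijective A) {I : Ideal R} (hqI : (q : R) ∈ I) (hqQ : (q : 𝓞 L) ∈ Q.asIdeal)
    (hqQ2 : (q : 𝓞 L) ∉ Q.asIdeal ^ 2) (hIQ : ∀ x, A x ∈ Q.asIdeal ^ l → x ∈ I) {x : R}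
    (hx : A x ∈ Q.asIdeal) : x ∈ I := by
  obtain ⟨a, ha, b, hb, hab⟩ := Submodule.mem_sup.1 (le_pow_sup_span_singleton Q hqQ hqQ2 l hx)
  obtain ⟨c, rfl⟩ := Ideal.mem_span_singleton'.1 hb
  obtain ⟨a, rfl⟩ := hA.2 a
  obtain ⟨c, rfl⟩ := hA.2 c
  obtain rfl : a + q * c = x := by
    apply hA.1
    rw [← hab, map_add, ← nsmul_eq_mul, map_nsmul, nsmul_eq_mul, mul_comm]
  exact add_mem (hIQ a ha) (Ideal.mul_mem_right _ _ hqI)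

variable {K : Type*} [Field K] [NumberField K] {k : ℕ} {A : 𝓞 K →+ 𝓞 L}
  {P : HeightOneSpectrum (𝓞 K)}

lemma le_of_forall_map_mem_pow_imp (hA : Function.Surjective A) (hq : q.Prime)
    (hqP : (q : 𝓞 K) ∈ P.asIdeal) (hQ : Ideal.absNorm Q.asIdeal = q)
    (hPQ : ∀ x, A x ∈ Q.asIdeal ^ l → x ∈ P.asIdeal ^ k) : k ≤ l := by
  refine (Nat.pow_le_pow_iff_right hq.one_lt).1 ?_
  have hdvd : Ideal.absNorm P.asIdeal ^ k ∣ q ^ l := by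
    rw [← hQ, ← index_pow, ← index_pow, ← AddSubgroup.index_comap_of_surjective _ hA]
    exact AddSubgroup.index_dvd_of_le hPQ
  exact (Nat.pow_le_pow_left (le_absNorm_of_prime_natCast_mem hq hqP) k).trans
    (Nat.le_of_dvd (pow_pos hq.pos _) hdvd)

lemma exists_le_and_map_mul_map_sub_mem (hA : Function.Bijective A) (hk : k ≠ 0) {C : ℕ}
    (hincl : ∀ (Q : HeightOneSpectrum (𝓞 L)) (q : ℕ), q.Prime → (q : 𝓞 L) ∈ Q.asIdeal → C < q →
      ∃ P : HeightOneSpectrum (𝓞 K), (q : 𝓞 K) ∈ P.asIdeal ∧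
        ∀ x, A x ∈ Q.asIdeal ^ l → x ∈ P.asIdeal ^ k) {N : ℕ} (hN : N ≠ 0) :
    k ≤ l ∧ ∃ Q : Ideal (𝓞 L), (N : 𝓞 L) ∉ Q ∧ ∀ x y, A x * A y - A 1 * A (x * y) ∈ Q := by
  obtain ⟨Q, q, hq, hqQ, hqQ2, hNQ, hQ⟩ :=
    exists_unramified_degree_one_prime L (mul_ne_zero hN C.factorial_ne_zero)
  rw [Nat.cast_mul] at hNQ
  have hCq : C < q := by
    by_contra! hle
    exact hNQ (Ideal.mul_mem_left _ _
      (Ideal.mem_of_dvd _ (Nat.cast_dvd_cast ((Nat.Prime.dvd_factorial hq).2 hle)) hqQ))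
  obtain ⟨P, hqP, hPQ⟩ := hincl Q q hq hqQ hCq
  refine ⟨le_of_forall_map_mem_pow_imp hA.2 hq hqP (absNorm_eq_of_intCast_surjective hq hqQ hQ) hPQ,
    Q.asIdeal, fun h => hNQ (Ideal.mul_mem_right _ _ h), fun x y => ?_⟩
  let := Ideal.Quotient.field Q.asIdeal
  have hmul := map_mul_map_eq_of_ker_le hQ P.isPrime.ne_top
    (g := (Ideal.Quotient.mk Q.asIdeal).toAddMonoidHom.comp A)
    (fun x hx => mem_of_map_mem_of_forall_map_mem_pow_imp hA hqP hqQ hqQ2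
      (fun x hx => Ideal.pow_le_self hk (hPQ x hx)) (Ideal.Quotient.eq_zero_iff_mem.1 hx)) x y
  exact Ideal.Quotient.eq.1 (by simpa using hmul)

theorem le_and_map_mul_map_of_forall_map_mem_pow_imp (hA : Function.Bijective A) (hk : k ≠ 0)
    {C : ℕ}
    (hincl : ∀ (Q : HeightOneSpectrum (𝓞 L)) (q : ℕ), q.Prime → (q : 𝓞 L) ∈ Q.asIdeal → C < q →
      ∃ P : HeightOneSpectrum (𝓞 K), (q : 𝓞 K) ∈ P.asIdeal ∧
        ∀ x, A x ∈ Q.asIdeal ^ l → x ∈ P.asIdeal ^ k) :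
    k ≤ l ∧ ∀ x y, A x * A y = A 1 * A (x * y) := by
  refine ⟨(exists_le_and_map_mul_map_sub_mem hA hk hincl one_ne_zero).1, fun x y => ?_⟩
  by_contra hne
  set w := A x * A y - A 1 * A (x * y)
  have hw : Ideal.absNorm (Ideal.span {w}) ≠ 0 := by
    rw [Ne, Ideal.absNorm_eq_zero_iff, Ideal.span_singleton_eq_bot]
    exact sub_ne_zero.2 hne
  obtain ⟨-, Q, hwQ, hQ⟩ := exists_le_and_map_mul_map_sub_mem hA hk hincl hw
  exact hwQ ((Ideal.span_singleton_le_iff_mem _).2 (hQ x y) (Ideal.absNorm_mem _))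

end Multiplicativity

lemma nonempty_ringEquiv_of_map_mul_map {R S K L : Type*} [CommRing R] [IsDomain R] [CommRing S]
    [IsDomain S] [Field K] [Field L] [Algebra R K] [Algebra S L] [IsFractionRing R K]
    [IsFractionRing S L] {A : R →+ S}
    (hA : Function.Bijective A) (hmul : ∀ x y, A x * A y = A 1 * A (x * y)) :
    Nonempty (K ≃+* L) := by
  have h1 : algebraMap S L (A 1) ≠ 0 := by simp [hA.1.ne_iff' (map_zero A)]
  let φ : R →+* L :=
    { toFun := fun x => algebraMap S L (A x) / algebraMap S L (A 1)
      map_one' := div_self h1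
      map_zero' := by simp
      map_add' := fun x y => by simp [add_div]
      map_mul' := fun x y => by
        rw [div_mul_div_comm, ← map_mul (algebraMap S L) (A x), hmul, map_mul (algebraMap S L),
          mul_div_mul_left _ _ h1] }
  have hφ : Function.Injective φ := fun x y h =>
    hA.1 (IsFractionRing.injective S L ((div_left_inj' h1).1 h))
  let Φ : K →+* L := IsFractionRing.lift hφ
  have hΦ : ∀ x, Φ (algebraMap R K x) = algebraMap S L (A x) / algebraMap S L (A 1) :=
    IsFractionRing.lift_algebraMap hφ
  refine ⟨RingEquiv.ofBijective Φ ⟨Φ.injective, fun y => ?_⟩⟩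
  obtain ⟨a, b, -, rfl⟩ := IsFractionRing.div_surjective (A := S) y
  obtain ⟨a, rfl⟩ := hA.2 a
  obtain ⟨b, rfl⟩ := hA.2 b
  exact ⟨algebraMap R K a / algebraMap R K b, by
    rw [map_div₀, hΦ, hΦ, div_div_div_cancel_right₀ h1]⟩

section AdmissibleDensity

variable {K : Type*} [Field K] [NumberField K] {k l : ℕ}

/-- The density `1 - N(𝔭)⁻ᵏ` of the complement of one residue class modulo `𝔭 ^ k`. -/
noncomputable def localDensity (k : ℕ) (P : HeightOneSpectrum (𝓞 K)) : ℝ :=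
  1 - ((Ideal.absNorm P.asIdeal : ℝ) ^ k)⁻¹

variable (K) in
/-- The product `∏ (1 - N(𝔭)⁻ᵏ)` over all primes, written as the infimum of its finite subproducts;
up to a factor `log 2` it is the topological entropy of `𝔻_{K,k}`. -/
noncomputable def admissibleDensity (k : ℕ) : ℝ :=
  ⨅ T : Finset (HeightOneSpectrum (𝓞 K)), ∏ P ∈ T, localDensity k P

lemma one_lt_absNorm_cast (P : HeightOneSpectrum (𝓞 K)) : (1 : ℝ) < Ideal.absNorm P.asIdeal :=
  Nat.one_lt_cast.2 (NumberField.HeightOneSpectrum.one_lt_absNorm P)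

lemma localDensity_nonneg (k : ℕ) (P : HeightOneSpectrum (𝓞 K)) : 0 ≤ localDensity k P :=
  sub_nonneg.2 (inv_le_one_of_one_le₀ (one_le_pow₀ (one_lt_absNorm_cast P).le))

lemma localDensity_le_one (k : ℕ) (P : HeightOneSpectrum (𝓞 K)) : localDensity k P ≤ 1 :=
  sub_le_self _ (by positivity)

lemma localDensity_lt_localDensity (h : k < l) (P : HeightOneSpectrum (𝓞 K)) :
    localDensity k P < localDensity l P := by
  have hN := one_lt_absNorm_cast P
  exact sub_lt_sub_left (inv_strictAnti₀ (by positivity) (pow_lt_pow_right₀ hN h)) 1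

lemma localDensity_pos (hk : k ≠ 0) (P : HeightOneSpectrum (𝓞 K)) : 0 < localDensity k P :=
  (localDensity_nonneg 0 P).trans_lt (localDensity_lt_localDensity (Nat.pos_of_ne_zero hk) P)

lemma admissibleDensity_le_prod (T : Finset (HeightOneSpectrum (𝓞 K))) :
    admissibleDensity K k ≤ ∏ P ∈ T, localDensity k P :=
  ciInf_le ⟨0, by rintro _ ⟨T, rfl⟩; exact Finset.prod_nonneg fun P _ => localDensity_nonneg k P⟩ T

variable (K) in
lemma exists_sum_inv_absNorm_pow_le (hk : 2 ≤ k) :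
    ∃ C : ℝ, ∀ T : Finset (HeightOneSpectrum (𝓞 K)),
      ∑ P ∈ T, ((Ideal.absNorm P.asIdeal : ℝ) ^ k)⁻¹ ≤ C := by
  classical
  choose q hq hqP using exists_prime_natCast_mem (R := 𝓞 K)
  refine ⟨Module.finrank ℚ K * ∑' n : ℕ, ((n : ℝ) ^ 2)⁻¹, fun T => ?_⟩
  calc ∑ P ∈ T, ((Ideal.absNorm P.asIdeal : ℝ) ^ k)⁻¹
      ≤ ∑ P ∈ T, ((q P : ℝ) ^ 2)⁻¹ := by
        refine Finset.sum_le_sum fun P _ => ?_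
        have h0 : (0 : ℝ) < q P := Nat.cast_pos.2 (hq P).pos
        have hqN : (q P : ℝ) ≤ Ideal.absNorm P.asIdeal :=
          Nat.cast_le.2 (le_absNorm_of_prime_natCast_mem (hq P) (hqP P))
        exact inv_anti₀ (by positivity) ((pow_le_pow_left₀ h0.le hqN 2).trans
          (pow_le_pow_right₀ (one_lt_absNorm_cast P).le hk))
    _ = ∑ n ∈ T.image q, {P ∈ T | q P = n}.card • ((n : ℝ) ^ 2)⁻¹ :=
        Finset.sum_comp (fun n : ℕ => ((n : ℝ) ^ 2)⁻¹) q
    _ ≤ ∑ n ∈ T.image q, Module.finrank ℚ K * ((n : ℝ) ^ 2)⁻¹ := by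
        refine Finset.sum_le_sum fun n hn => ?_
        obtain ⟨P₀, -, rfl⟩ := Finset.mem_image.1 hn
        rw [nsmul_eq_mul]
        gcongr
        refine card_le_finrank_of_forall_natCast_mem (hq P₀) fun P hP => ?_
        rw [← (Finset.mem_filter.1 hP).2]
        exact hqP P
    _ ≤ Module.finrank ℚ K * ∑' n : ℕ, ((n : ℝ) ^ 2)⁻¹ := by
        rw [← Finset.mul_sum]
        gcongr
        exact (Real.summable_nat_pow_inv.2 one_lt_two).sum_le_tsum _ fun _ _ => by positivity

lemma exp_neg_two_mul_le_one_sub {a : ℝ} (h0 : 0 ≤ a) (ha : a ≤ 1 / 2) :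
    Real.exp (-(2 * a)) ≤ 1 - a := by
  have hpos : 0 < 1 - a := by linarith
  rw [← Real.le_log_iff_exp_le hpos]
  refine le_trans ?_ (Real.one_sub_inv_le_log_of_pos hpos)
  have hinv : (1 - a)⁻¹ ≤ 1 + 2 * a := by
    rw [inv_le_iff_one_le_mul₀ hpos]
    nlinarith
  linarith

lemma admissibleDensity_pos (hk : 2 ≤ k) : 0 < admissibleDensity K k := by
  obtain ⟨C, hC⟩ := exists_sum_inv_absNorm_pow_le K hk
  refine (Real.exp_pos (-(2 * C))).trans_le (le_ciInf fun T => ?_)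
  calc Real.exp (-(2 * C))
      ≤ Real.exp (∑ P ∈ T, -(2 * ((Ideal.absNorm P.asIdeal : ℝ) ^ k)⁻¹)) := by
        rw [Finset.sum_neg_distrib, ← Finset.mul_sum]
        gcongr
        exact hC T
    _ = ∏ P ∈ T, Real.exp (-(2 * ((Ideal.absNorm P.asIdeal : ℝ) ^ k)⁻¹)) := Real.exp_sum _ _
    _ ≤ ∏ P ∈ T, localDensity k P := by
        refine Finset.prod_le_prod (fun _ _ => (Real.exp_pos _).le) fun P _ => ?_
        have hN : (2 : ℝ) ≤ Ideal.absNorm P.asIdeal := by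
          exact_mod_cast NumberField.HeightOneSpectrum.one_lt_absNorm P
        have hNk : (2 : ℝ) ≤ (Ideal.absNorm P.asIdeal : ℝ) ^ k :=
          hN.trans (le_self_pow₀ (by linarith) (by lia))
        exact exp_neg_two_mul_le_one_sub (by positivity)
          (by rw [one_div]; exact inv_anti₀ two_pos hNk)

lemma admissibleDensity_lt_admissibleDensity (hk : k ≠ 0) (h : k < l) :
    admissibleDensity K k < admissibleDensity K l := by
  classical
  obtain ⟨P₀⟩ := nonempty_heightOneSpectrum (K := K)
  have hpos := localDensity_pos hk P₀
  have hlt := localDensity_lt_localDensity h P₀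
  have hratio : localDensity l P₀ / localDensity k P₀ * admissibleDensity K k ≤
      admissibleDensity K l := by
    refine le_ciInf fun T => ?_
    rw [div_mul_eq_mul_div, div_le_iff₀ hpos]
    calc localDensity l P₀ * admissibleDensity K k
        ≤ localDensity l P₀ * (localDensity k P₀ * ∏ P ∈ T.erase P₀, localDensity k P) := by
          rw [← Finset.prod_insert (Finset.notMem_erase P₀ T)]
          exact mul_le_mul_of_nonneg_left (admissibleDensity_le_prod _) (hpos.trans hlt).le
      _ ≤ localDensity l P₀ * (localDensity k P₀ * ∏ P ∈ T.erase P₀, localDensity l P) := by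
          have hprod := Finset.prod_le_prod (s := T.erase P₀) (fun P _ => localDensity_nonneg k P)
            fun P _ => (localDensity_lt_localDensity h P).le
          have := (hpos.trans hlt).le
          gcongr
      _ = (∏ P ∈ insert P₀ T, localDensity l P) * localDensity k P₀ := by
          rw [← Finset.mul_prod_erase _ _ (Finset.mem_insert_self P₀ T),
            Finset.erase_insert_eq_erase]
          ring
      _ ≤ (∏ P ∈ T, localDensity l P) * localDensity k P₀ := by
          refine mul_le_mul_of_nonneg_right ?_ hpos.le
          exact Finset.prod_le_prod_of_subset_of_le_one (Finset.subset_insert _ _)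
            (fun P _ => localDensity_nonneg l P) fun P _ _ => localDensity_le_one l P
  have hratio_gt : 1 < localDensity l P₀ / localDensity k P₀ := (one_lt_div hpos).2 hlt
  by_contra! hle
  exact (lt_mul_left (admissibleDensity_pos (by lia)) hratio_gt).not_ge
    ((mul_le_mul_of_nonneg_left hle (one_pos.trans hratio_gt).le).trans hratio)

lemma admissibleDensity_le_of_ringEquiv {L : Type*} [Field L] [NumberField L] (e : K ≃+* L)
    (k : ℕ) : admissibleDensity K k ≤ admissibleDensity L k := by
  classical
  let φ : 𝓞 K ≃+* 𝓞 L := RingOfIntegers.mapRingEquiv e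
  let ψ : HeightOneSpectrum (𝓞 L) → HeightOneSpectrum (𝓞 K) :=
    HeightOneSpectrum.comap (φ : 𝓞 K →+* 𝓞 L) φ.surjective
  have hψ : Function.Injective ψ := fun Q Q' h => HeightOneSpectrum.ext
    (Ideal.comap_injective_of_surjective φ φ.surjective (congrArg HeightOneSpectrum.asIdeal h))
  have hdensity : ∀ Q, localDensity k (ψ Q) = localDensity k Q := fun Q => by
    rw [localDensity, localDensity, Ideal.absNorm_apply, Ideal.absNorm_apply,
      Submodule.cardQuot_apply, Submodule.cardQuot_apply]
    rw [Nat.card_congr (Ideal.quotientEquiv (ψ Q).asIdeal Q.asIdeal φ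
      (Ideal.map_comap_of_surjective φ φ.surjective Q.asIdeal).symm).toEquiv]
  refine le_ciInf fun T => (admissibleDensity_le_prod (T.image ψ)).trans_eq ?_
  rw [Finset.prod_image hψ.injOn]
  exact Finset.prod_congr rfl fun Q _ => hdensity Q

end AdmissibleDensity

section PatternCounting

open scoped Pointwise

variable {G H : Type*} {𝒳 : Set (Set G)} {𝒴 : Set (Set H)} {V W : Finset G}

/-- The number of patterns `V ∩ X` which the sets `X ∈ 𝒳` show in the finite window `V`; its
exponential growth rate along a Følner sequence of windows is the topological entropy. -/
noncomputable def patternCount (𝒳 : Set (Set G)) (V : Finset G) : ℕ :=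
  (Set.range fun X : 𝒳 => (V : Set G) ∩ X).ncard

lemma finite_range_inter (𝒳 : Set (Set G)) (V : Finset G) :
    (Set.range fun X : 𝒳 => (V : Set G) ∩ X).Finite :=
  V.finite_toSet.powerset.subset (Set.range_subset_iff.2 fun _ => Set.inter_subset_left)

lemma two_pow_card_le_patternCount (h𝒳 : IsLowerSet 𝒳) {Y : Finset G} (hY : ↑Y ∈ 𝒳)
    (hYW : Y ⊆ W) : 2 ^ Y.card ≤ patternCount 𝒳 W := by
  rw [← Set.ncard_coe_finset, ← Set.ncard_powerset _ Y.finite_toSet]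
  refine Set.ncard_le_ncard (fun X hX => ⟨⟨X, h𝒳 hX hY⟩, ?_⟩) (finite_range_inter 𝒳 W)
  exact Set.inter_eq_right.2 (hX.trans (Finset.coe_subset.2 hYW))

lemma patternCount_le_card_mul_two_rpow {ι : Type*} [Finite ι] {D : ι → Finset G} {r : ℝ}
    (hD : ∀ X ∈ 𝒳, ∃ i, ∀ v ∈ V, v ∈ X → v ∈ D i) (hr : ∀ i, ((D i).card : ℝ) ≤ r) :
    (patternCount 𝒳 V : ℝ) ≤ Nat.card ι * 2 ^ r := by
  have := Fintype.ofFinite ι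
  have hcover : Set.range (fun X : 𝒳 => (V : Set G) ∩ X) ⊆ ⋃ i ∈ Finset.univ, 𝒫 (D i : Set G) := by
    rintro _ ⟨X, rfl⟩
    obtain ⟨i, hi⟩ := hD X X.2
    exact Set.mem_iUnion₂.2 ⟨i, Finset.mem_univ i, fun v hv => hi v hv.1 hv.2⟩
  have hcard : patternCount 𝒳 V ≤ ∑ i, (𝒫 (D i : Set G)).ncard :=
    (Set.ncard_le_ncard hcover (Set.Finite.biUnion (Finset.finite_toSet _)
      fun i _ => (D i).finite_toSet.powerset)).trans (Finset.set_ncard_biUnion_le _ _)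
  calc (patternCount 𝒳 V : ℝ) ≤ ∑ i, (2 : ℝ) ^ ((D i).card : ℝ) := by
        simp only [Real.rpow_natCast]
        simpa [Set.ncard_powerset, Set.ncard_coe_finset] using Nat.cast_le (α := ℝ).2 hcard
    _ ≤ ∑ _i : ι, (2 : ℝ) ^ r :=
        Finset.sum_le_sum fun i _ => Real.rpow_le_rpow_of_exponent_le one_le_two (hr i)
    _ = Nat.card ι * 2 ^ r := by simp

lemma IsBlockCode.patternCount_image_le [AddCommGroup G] [AddCommGroup H] [DecidableEq G]
    [DecidableEq H] {A : G →+ H} {f : 𝒳 → 𝒴} {B : Finset G} (hf : IsBlockCode A f B)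
    (hfsurj : Function.Surjective f) (W : Finset G) :
    patternCount 𝒴 (W.image A) ≤ patternCount 𝒳 (W + B) := by
  have hfactors : Function.FactorsThrough (fun X => (W.image A : Set H) ∩ f X)
      fun X : 𝒳 => ((W + B : Finset G) : Set G) ∩ X := by
    intro X X' h
    ext y
    refine and_congr_right fun hy => ?_
    obtain ⟨w, hw, rfl⟩ := Finset.mem_image.1 hy
    refine hf w w X X' fun b hb => ?_
    have hwb : w + b ∈ W + B := Finset.add_mem_add hw hb
    simpa only [Set.mem_inter_iff, Finset.mem_coe, hwb, true_and] using Set.ext_iff.1 h (w + b)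
  rw [patternCount, ← hfsurj.range_comp, Function.comp_def,
    ← hfactors.extend_comp fun _ => ∅, Set.range_comp]
  exact Set.ncard_image_le (finite_range_inter 𝒳 (W + B))

end PatternCounting

section Folner

open scoped Pointwise

lemma exists_card_add_le_pi {ι : Type*} [Finite ι] [Nonempty ι] [DecidableEq (ι → ℤ)]
    (E : Finset (ι → ℤ)) {ε : ℝ} (hε : 0 < ε) (M : ℕ) :
    ∃ W : Finset (ι → ℤ), M ≤ W.card ∧ ((W + E).card : ℝ) ≤ (1 + ε) * W.card := by
  classical
  have := Fintype.ofFinite ι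
  obtain ⟨a, ha⟩ := E.finite_toSet.bddBelow
  obtain ⟨b, hb⟩ := E.finite_toSet.bddAbove
  let W : ℕ → Finset (ι → ℤ) := fun n => Finset.Icc 0 fun _ => n
  let U : ℕ → Finset (ι → ℤ) := fun n => Finset.Icc a fun i => n + (b i - a i)⁺ + a i
  have hWcard : ∀ n, (W n).card = (n + 1) ^ Fintype.card ι := fun n => by
    simp [W, Pi.card_Icc]
  have hUcard : ∀ n, ((U n).card : ℝ) = ∏ i, ((n : ℝ) + 1 + ((b i - a i)⁺ : ℤ)) := fun n => by
    rw [Pi.card_Icc, Nat.cast_prod]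
    refine Finset.prod_congr rfl fun i _ => ?_
    have := posPart_nonneg (b i - a i)
    rw [Int.card_Icc, ← Int.cast_natCast, Int.toNat_of_nonneg (by lia)]
    push_cast
    ring
  have hadd : ∀ n, W n + E ⊆ U n := fun n x hx => by
    obtain ⟨w, hw, e, he, rfl⟩ := Finset.mem_add.1 hx
    obtain ⟨hw0, hwn⟩ := Finset.mem_Icc.1 hw
    refine Finset.mem_Icc.2 ⟨fun i => ?_, fun i => ?_⟩
    · simpa using add_le_add (hw0 i) (ha he i)
    · have := le_posPart (b i - a i)
      have := hwn i
      have := hb he i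
      simp only [Pi.add_apply]
      lia
  have hratio : Filter.Tendsto (fun n : ℕ => ∏ i, (1 + ((b i - a i)⁺ : ℤ) * (1 / ((n : ℝ) + 1))))
      Filter.atTop (nhds 1) := by
    simpa using tendsto_finsetProd Finset.univ fun i _ =>
      (tendsto_one_div_add_atTop_nhds_zero_nat.const_mul (((b i - a i)⁺ : ℤ) : ℝ)).const_add 1
  obtain ⟨n, hn, hMn⟩ := ((hratio.eventually_le_const (lt_add_of_pos_right 1 hε)).and
    (Filter.eventually_ge_atTop M)).exists
  refine ⟨W n, ?_, ?_⟩
  · rw [hWcard]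
    exact (hMn.trans n.le_succ).trans (Nat.le_self_pow Fintype.card_ne_zero _)
  · calc ((W n + E).card : ℝ) ≤ (U n).card := Nat.cast_le.2 (Finset.card_le_card (hadd n))
      _ = (∏ i, (1 + ((b i - a i)⁺ : ℤ) * (1 / ((n : ℝ) + 1)))) * (W n).card := by
        rw [hUcard, hWcard, ← Finset.card_univ]
        push_cast
        rw [← Finset.prod_const, ← Finset.prod_mul_distrib]
        refine Finset.prod_congr rfl fun i _ => ?_
        field_simp
      _ ≤ (1 + ε) * (W n).card := by gcongr

lemma exists_card_add_le {G : Type*} [AddCommGroup G] [Module.Free ℤ G] [Module.Finite ℤ G]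
    [Nontrivial G] [DecidableEq G] (E : Finset G) {ε : ℝ} (hε : 0 < ε) (M : ℕ) :
    ∃ W : Finset G, M ≤ W.card ∧ ((W + E).card : ℝ) ≤ (1 + ε) * W.card := by
  classical
  let e := (Module.Free.chooseBasis ℤ G).equivFun.symm
  have hcard : ∀ V : Finset (Module.Free.ChooseBasisIndex ℤ G → ℤ), (V.image e).card = V.card :=
    fun V => Finset.card_image_of_injective V e.injective
  obtain ⟨W, hM, hW⟩ := exists_card_add_le_pi (E.image e.symm) hε M
  refine ⟨W.image e, by rwa [hcard], ?_⟩
  have hE : E = (E.image e.symm).image e := by simp [Finset.image_image, Function.comp_def]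
  rwa [hE, ← Finset.image_add, hcard, hcard]

end Folner

section Density

lemma exists_subset_missesClass {R : Type*} [CommRing R] (I : Ideal R) [Finite (R ⧸ I)]
    (Y : Finset R) : ∃ Y' ⊆ Y, MissesClass I (Y' : Set R) ∧
      (1 - (Nat.card (R ⧸ I) : ℝ)⁻¹) * Y.card ≤ Y'.card := by
  classical
  have := Fintype.ofFinite (R ⧸ I)
  obtain ⟨q, -, hq⟩ := Finset.exists_card_fiber_le_of_card_le_nsmul (s := Y)
    (t := Finset.univ) (f := Ideal.Quotient.mk I) (b := (Nat.card (R ⧸ I) : ℝ)⁻¹ * Y.card)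
    Finset.univ_nonempty (by simp [Nat.card_eq_fintype_card])
  obtain ⟨c, rfl⟩ := Ideal.Quotient.mk_surjective q
  refine ⟨Y.filter fun y => Ideal.Quotient.mk I y ≠ Ideal.Quotient.mk I c,
    Finset.filter_subset _ _, ⟨c, fun y hy hyc => ?_⟩, ?_⟩
  · exact (Finset.mem_filter.1 hy).2 (Ideal.Quotient.eq.2 hyc)
  · have hsplit := Finset.card_filter_add_card_filter_not (s := Y)
      fun y => Ideal.Quotient.mk I y = Ideal.Quotient.mk I c
    rw [← hsplit] at hq ⊢
    push_cast at hq ⊢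
    linarith

variable {K : Type*} [Field K] [NumberField K] {k : ℕ}

lemma exists_subset_forall_missesClass (k : ℕ) (T : Finset (HeightOneSpectrum (𝓞 K)))
    (W : Finset (𝓞 K)) : ∃ Y ⊆ W, (∀ P ∈ T, MissesClass (P.asIdeal ^ k) (Y : Set (𝓞 K))) ∧
      (∏ P ∈ T, localDensity k P) * W.card ≤ Y.card := by
  classical
  induction T using Finset.induction_on with
  | empty => exact ⟨W, subset_rfl, by simp, by simp⟩
  | insert P T hP ih =>
    obtain ⟨Y, hYW, hYT, hY⟩ := ih
    obtain ⟨Y', hY'Y, hY'P, hY'⟩ := exists_subset_missesClass (P.asIdeal ^ k) Y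
    refine ⟨Y', hY'Y.trans hYW, Finset.forall_mem_insert _ _ _ |>.2
      ⟨hY'P, fun Q hQ => (hYT Q hQ).mono (Finset.coe_subset.2 hY'Y)⟩, ?_⟩
    rw [card_quotient_pow, Nat.cast_pow] at hY'
    rw [Finset.prod_insert hP, mul_assoc]
    exact (mul_le_mul_of_nonneg_left hY (localDensity_nonneg k P)).trans hY'

lemma exists_subset_mem_admissibleSets (hk : k ≠ 0) (W : Finset (𝓞 K)) :
    ∃ Y ⊆ W, (Y : Set (𝓞 K)) ∈ admissibleSets K k ∧
      admissibleDensity K k * W.card ≤ Y.card := by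
  have hT := Ring.HasFiniteQuotients.finite_absNorm_heightOneSpectrum_le (R := 𝓞 K) W.card
  obtain ⟨Y, hYW, hYT, hY⟩ := exists_subset_forall_missesClass k hT.toFinset W
  refine ⟨Y, hYW, mem_admissibleSets_iff.2 fun P => ?_,
    le_trans (by gcongr; exact admissibleDensity_le_prod _) hY⟩
  by_cases hP : Ideal.absNorm P.asIdeal ≤ W.card
  · exact hYT P (hT.mem_toFinset.2 hP)
  · refine missesClass_of_card_lt ?_
    calc Y.card ≤ W.card := Finset.card_le_card hYW
      _ < Ideal.absNorm P.asIdeal := not_le.1 hP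
      _ ≤ Ideal.absNorm P.asIdeal ^ k := Nat.le_self_pow hk _
      _ = Nat.card (𝓞 K ⧸ P.asIdeal ^ k) := (card_quotient_pow P k).symm

open scoped Pointwise

lemma exists_card_mul_card_le {G Q : Type*} [AddGroup G] [AddGroup Q] [Fintype Q]
    [DecidableEq G] {π : G →+ Q} (hπ : Function.Surjective π) :
    ∃ E : Finset G, ∀ (D : Finset G) (C : Finset Q), (∀ d ∈ D, π d ∈ C) →
      Fintype.card Q * D.card ≤ C.card * (D + E).card := by
  obtain ⟨s, hs⟩ := hπ.hasRightInverse
  refine ⟨Finset.univ.image s, fun D C hDC => ?_⟩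
  rw [← Finset.card_univ, ← Finset.card_product, ← Finset.card_product]
  refine Finset.card_le_card_of_injOn (fun p => (π p.2, p.2 + s p.1)) ?_ ?_
  · rintro ⟨q, d⟩ h
    have hd : d ∈ D := (Finset.mem_product.1 h).2
    exact Finset.mem_product.2
      ⟨hDC d hd, Finset.add_mem_add hd (Finset.mem_image_of_mem s (Finset.mem_univ q))⟩
  · rintro ⟨q, d⟩ - ⟨q', d'⟩ - h
    obtain ⟨hd, hsum⟩ := Prod.mk.inj h
    have hq : q = q' := by simpa [hs.eq, hd] using congrArg π hsum
    subst hq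
    simpa using hsum

lemma exists_card_le_of_forall_mk_ne [DecidableEq (𝓞 K)] (k : ℕ)
    (S : Finset (HeightOneSpectrum (𝓞 K))) :
    ∃ E : Finset (𝓞 K), ∀ (c : ∀ P : S, 𝓞 K ⧸ P.1.asIdeal ^ k) (D : Finset (𝓞 K)),
      (∀ d ∈ D, ∀ P : S, Ideal.Quotient.mk (P.1.asIdeal ^ k) d ≠ c P) →
      (D.card : ℝ) ≤ (D + E).card * ∏ P ∈ S, localDensity k P := by
  classical
  have (P : S) : Fintype (𝓞 K ⧸ P.1.asIdeal ^ k) := Fintype.ofFinite _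
  have hcoprime : Pairwise fun P P' : S => IsCoprime (P.1.asIdeal ^ k) (P'.1.asIdeal ^ k) :=
    fun P P' hne => IsCoprime.pow <| Ideal.isCoprime_of_isMaximal fun h =>
      hne (Subtype.ext (HeightOneSpectrum.ext h))
  let π : 𝓞 K →+ ∀ P : S, 𝓞 K ⧸ P.1.asIdeal ^ k :=
    (RingHom.pi fun P : S => Ideal.Quotient.mk (P.1.asIdeal ^ k)).toAddMonoidHom
  have hπ : Function.Surjective π := fun q =>
    (Ideal.pi_quotient_surjective hcoprime q).imp fun _ => funext
  obtain ⟨E, hE⟩ := exists_card_mul_card_le hπ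
  refine ⟨E, fun c D hD => ?_⟩
  have hlocal : ∀ P : S, ((Finset.univ.erase (c P)).card : ℝ) =
      Fintype.card (𝓞 K ⧸ P.1.asIdeal ^ k) * localDensity k P.1 := fun P => by
    have hcard : (Fintype.card (𝓞 K ⧸ P.1.asIdeal ^ k) : ℝ) = Ideal.absNorm P.1.asIdeal ^ k := by
      rw [← Nat.card_eq_fintype_card, card_quotient_pow, Nat.cast_pow]
    have hpos := pow_pos (zero_lt_one.trans (one_lt_absNorm_cast P.1)) k
    rw [Finset.card_erase_of_mem (Finset.mem_univ _), Finset.card_univ,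
      Nat.cast_pred Fintype.card_pos, hcard, localDensity, mul_sub, mul_inv_cancel₀ hpos.ne',
      mul_one]
  have hcount := hE D (Fintype.piFinset fun P => Finset.univ.erase (c P)) fun d hd =>
    Fintype.mem_piFinset.2 fun P => Finset.mem_erase.2 ⟨hD d hd P, Finset.mem_univ _⟩
  rw [Fintype.card_piFinset, Fintype.card_pi] at hcount
  have hcount' := Nat.cast_le (α := ℝ).2 hcount
  push_cast at hcount'
  rw [Finset.prod_congr rfl fun P _ => hlocal P, Finset.prod_mul_distrib, mul_assoc] at hcount'
  rw [mul_comm, ← Finset.prod_coe_sort]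
  exact le_of_mul_le_mul_left hcount'
    (Finset.prod_pos fun _ _ => Nat.cast_pos.2 Fintype.card_pos)

lemma exists_patternCount_admissibleSets_le [DecidableEq (𝓞 K)] (k : ℕ)
    (S : Finset (HeightOneSpectrum (𝓞 K))) :
    ∃ (E : Finset (𝓞 K)) (n : ℕ), ∀ V : Finset (𝓞 K),
      (patternCount (admissibleSets K k) V : ℝ) ≤
        n * 2 ^ ((V + E).card * ∏ P ∈ S, localDensity k P) := by
  classical
  obtain ⟨E, hE⟩ := exists_card_le_of_forall_mk_ne k S
  refine ⟨E, Nat.card (∀ P : S, 𝓞 K ⧸ P.1.asIdeal ^ k), fun V => ?_⟩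
  let D (c : ∀ P : S, 𝓞 K ⧸ P.1.asIdeal ^ k) : Finset (𝓞 K) :=
    V.filter fun v => ∀ P : S, Ideal.Quotient.mk (P.1.asIdeal ^ k) v ≠ c P
  refine patternCount_le_card_mul_two_rpow (D := D) (fun X hX => ?_) fun c => ?_
  · choose c hc using mem_admissibleSets_iff.1 hX
    exact ⟨fun P => Ideal.Quotient.mk _ (c P.1), fun v hv hvX => Finset.mem_filter.2
      ⟨hv, fun P h => hc P.1 v hvX (Ideal.Quotient.eq.1 h)⟩⟩
  · calc ((D c).card : ℝ) ≤ (D c + E).card * ∏ P ∈ S, localDensity k P :=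
          hE c (D c) fun d hd => (Finset.mem_filter.1 hd).2
      _ ≤ (V + E).card * ∏ P ∈ S, localDensity k P := by
          gcongr
          · exact Finset.prod_nonneg fun P _ => localDensity_nonneg k P
          · exact Finset.filter_subset _ V

lemma IsBlockCode.exists_card_le_of_mem {H : Type*} [AddCommGroup H] [DecidableEq (𝓞 K)]
    [DecidableEq H] {𝒴 : Set (Set H)} {A : 𝓞 K →+ H} {f : admissibleSets K k → 𝒴}
    {B : Finset (𝓞 K)} (hf : IsBlockCode A f B) (hfsurj : Function.Surjective f)
    (h𝒴 : IsLowerSet 𝒴) (S : Finset (HeightOneSpectrum (𝓞 K))) :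
    ∃ (E : Finset (𝓞 K)) (n : ℕ), ∀ W : Finset (𝓞 K), ∀ Y ⊆ W.image A, (Y : Set H) ∈ 𝒴 →
      (Y.card : ℝ) ≤ n + (W + E).card * ∏ P ∈ S, localDensity k P := by
  obtain ⟨E, n, hcount⟩ := exists_patternCount_admissibleSets_le k S
  refine ⟨B + E, n, fun W Y hYW hY => (Real.rpow_le_rpow_left_iff one_lt_two).1 ?_⟩
  calc (2 : ℝ) ^ (Y.card : ℝ) = (2 ^ Y.card : ℕ) := by
        rw [Real.rpow_natCast, Nat.cast_pow, Nat.cast_ofNat]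
    _ ≤ patternCount (admissibleSets K k) (W + B) := Nat.cast_le.2 <|
        (two_pow_card_le_patternCount h𝒴 hY hYW).trans (hf.patternCount_image_le hfsurj W)
    _ ≤ n * 2 ^ ((W + (B + E)).card * ∏ P ∈ S, localDensity k P) := by
        rw [← add_assoc]
        exact hcount (W + B)
    _ ≤ 2 ^ (n : ℝ) * 2 ^ ((W + (B + E)).card * ∏ P ∈ S, localDensity k P) := by
        gcongr
        rw [Real.rpow_natCast]
        exact_mod_cast n.lt_two_pow_self.le
    _ = 2 ^ (n + (W + (B + E)).card * ∏ P ∈ S, localDensity k P) :=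
        (Real.rpow_add two_pos _ _).symm

theorem admissibleDensity_le_of_isBlockCode {L : Type*} [Field L] [NumberField L] {l : ℕ}
    {A : 𝓞 K →+ 𝓞 L} {f : admissibleSets K k → admissibleSets L l} {B : Finset (𝓞 K)}
    (hf : IsBlockCode A f B) (hfsurj : Function.Surjective f) (hA : Function.Injective A)
    (hl : l ≠ 0) : admissibleDensity L l ≤ admissibleDensity K k := by
  classical
  refine le_ciInf fun S => le_of_forall_pos_le_add fun ε hε => ?_
  set p := ∏ P ∈ S, localDensity k P
  have hp0 : 0 ≤ p := Finset.prod_nonneg fun P _ => localDensity_nonneg k P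
  have hp1 : p ≤ 1 := Finset.prod_le_one (fun P _ => localDensity_nonneg k P)
    fun P _ => localDensity_le_one k P
  obtain ⟨E, n, hcount⟩ := hf.exists_card_le_of_mem hfsurj isLowerSet_admissibleSets S
  obtain ⟨M, hM⟩ := exists_nat_ge (n / (ε / 2))
  obtain ⟨W, hMW, hW⟩ := exists_card_add_le E (half_pos hε) (M + 1)
  obtain ⟨Y, hYW, hYadm, hY⟩ := exists_subset_mem_admissibleSets hl (W.image A)
  rw [Finset.card_image_of_injective _ hA] at hY
  have hWpos : (0 : ℝ) < W.card := Nat.cast_pos.2 (M.succ_pos.trans_le hMW)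
  have hn : (n : ℝ) ≤ ε / 2 * W.card := by
    rw [div_le_iff₀' (half_pos hε)] at hM
    exact hM.trans (by gcongr; exact M.le_succ.trans hMW)
  refine le_of_mul_le_mul_right ?_ hWpos
  calc admissibleDensity L l * W.card ≤ Y.card := hY
    _ ≤ n + (W + E).card * p := hcount W Y hYW hYadm
    _ ≤ ε / 2 * W.card + (1 + ε / 2) * W.card * p := by gcongr
    _ = (p + (ε / 2 + ε / 2 * p)) * W.card := by ring
    _ ≤ (p + (ε / 2 + ε / 2 * 1)) * W.card := by gcongr
    _ = (p + ε) * W.card := by ring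

end Density

/-- If `𝔻_{L,l}` is a factor system of `𝔻_{K,k}` (there is a surjective additive group
homomorphism `A : 𝓞 K → 𝓞 L` and a continuous surjection `f : 𝕏_{K,k} → 𝕏_{L,l}`
intertwining the translation actions), then `K ≅ L` and `k = l`. -/
theorem factor_system_rigidity {K L : Type*} [Field K] [NumberField K]
    [Field L] [NumberField L] (k l : ℕ) (hk : 1 ≤ k) (hl : 1 ≤ l)
    (A : 𝓞 K →+ 𝓞 L) (hAsurj : Function.Surjective A)
    (f : ↥(admissibleSets K k) → ↥(admissibleSets L l))
    (hfcont : Continuous f) (hfsurj : Function.Surjective f)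
    (hint : ∀ (t : 𝓞 K) (X Y : ↥(admissibleSets K k)),
      (Y : Set (𝓞 K)) = (t + ·) '' (X : Set (𝓞 K)) →
      ((f Y : Set (𝓞 L))) = (A t + ·) '' ((f X : Set (𝓞 L)))) :
    Nonempty (K ≃+* L) ∧ k = l := by
  have hk0 : k ≠ 0 := Nat.one_le_iff_ne_zero.1 hk
  have hl0 : l ≠ 0 := Nat.one_le_iff_ne_zero.1 hl
  have hequiv : IsEquivariant A f := hint
  obtain ⟨B, hB⟩ := hequiv.exists_isBlockCode hfcont isClosed_admissibleSets
    isTranslationInvariant_admissibleSets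
  have hA : Function.Injective A := hB.injective hfsurj hAsurj isLowerSet_admissibleSets
    univ_notMem_admissibleSets (singleton_mem_admissibleSets hl0 0)
  obtain ⟨C, hC⟩ := hB.exists_forall_map_mem_pow_imp hfsurj hAsurj hk0 hl0
  obtain ⟨hkl, hmul⟩ := le_and_map_mul_map_of_forall_map_mem_pow_imp ⟨hA, hAsurj⟩ hk0 hC
  obtain ⟨e⟩ : Nonempty (K ≃+* L) := nonempty_ringEquiv_of_map_mul_map ⟨hA, hAsurj⟩ hmul
  refine ⟨⟨e⟩, hkl.eq_of_not_lt fun hlt => lt_irrefl (admissibleDensity K k) ?_⟩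
  calc admissibleDensity K k
      < admissibleDensity K l := admissibleDensity_lt_admissibleDensity hk0 hlt
    _ ≤ admissibleDensity L l := admissibleDensity_le_of_ringEquiv e l
    _ ≤ admissibleDensity K k := admissibleDensity_le_of_isBlockCode hB hfsurj hA hl0
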